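/- Let v ≠ s be a vertex of 𝔅_n and let e ∈ B(v) be an agent edge of 𝔇_n belonging to v. Let π be a weak unichain policy for 𝔇_n such that Val_π(u) ≥ 0 for every vertex u. If e is an improving switch for π, then p_v/4 ≤ z_π(e) ≤ p_v · 2^{n+2}. -/

import Mathlib

/-! ## The Markov decision process `𝔅_n` -/

/-- Vertices of the MDP `𝔅_n`: a transportation vertex `t`, a sink `s`, a dummy vertex `d`,
and vertices `a i`, `b i` for `i ∈ {1,…,n}`. -/
inductive BV : Type where
  | t : BV
  | s : BV
  | d : BV
  | a : ℕ → BV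
  | b : ℕ → BV
deriving DecidableEq

/-- The vertex `a i` for `i ∈ {1,…,n+1}`, with the convention `a (n+1) = s`. -/
def aN (n i : ℕ) : BV := if i = n + 1 then BV.s else BV.a i

/-- The vertex `b i` for `i ∈ {1,…,n+1}`, with the convention `b (n+1) = d`. -/
def bN (n i : ℕ) : BV := if i = n + 1 then BV.d else BV.b i

/-- The vertex set of `𝔅_n`. -/
def IsBVertex (n : ℕ) : BV → Prop
  | BV.t => True
  | BV.s => True
  | BV.d => True
  | BV.a i => 1 ≤ i ∧ i ≤ n
  | BV.b i => 1 ≤ i ∧ i ≤ n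

/-- The edge relation of `𝔅_n`: travel, enter, skip, board, stay, leave edges,
the edge `(d,s)` and the self-loop `(s,s)`. -/
def BEdge (n : ℕ) (u v : BV) : Prop :=
  (∃ i, 1 ≤ i ∧ i ≤ n ∧ u = BV.t ∧ v = BV.a i) ∨
  (∃ i, 1 ≤ i ∧ i ≤ n ∧ u = BV.a i ∧ v = BV.b i) ∨
  (∃ i, 1 ≤ i ∧ i ≤ n ∧ u = BV.a i ∧ v = aN n (i + 1)) ∨
  (∃ i, 1 ≤ i ∧ i ≤ n ∧ u = BV.a i ∧ v = BV.t) ∨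
  (∃ i, 1 ≤ i ∧ i ≤ n ∧ u = BV.b i ∧ v = bN n (i + 1)) ∨
  (∃ i, 1 ≤ i ∧ i ≤ n ∧ u = BV.b i ∧ v = aN n (i + 1)) ∨
  (u = BV.d ∧ v = BV.s) ∨ (u = BV.s ∧ v = BV.s)

/-- The reward function of `𝔅_n`: `r(enter i) = 2^i`, `r(stay i) = 3/4`,
`r(board i) = -2^i + 5/4`, and reward `0` on all other edges. -/
def rB (n : ℕ) (u v : BV) : ℚ :=
  match u, v with
  | BV.a i, BV.b j => if i = j then 2 ^ i else 0
  | BV.a i, BV.t => -(2 ^ i) + 5 / 4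
  | BV.b i, BV.b j => if j = i + 1 then 3 / 4 else 0
  | BV.b i, BV.d => if i = n then 3 / 4 else 0
  | _, _ => 0

/-- A policy for `𝔅_n` chooses an outgoing edge at every vertex. -/
def IsBPolicy (n : ℕ) (π : BV → BV) : Prop := ∀ u, IsBVertex n u → BEdge n u (π u)

/-- A policy is weak unichain if it reaches the sink `s` from every vertex. -/
def BWeakUnichain (n : ℕ) (π : BV → BV) : Prop :=
  ∀ u, IsBVertex n u → ∃ k, π^[k] u = BV.s

open Classical in
/-- The value of a vertex `v` w.r.t. a (weak unichain) policy `π`: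
the sum of the rewards along the path that `π` takes from `v` to the sink `s`. -/
noncomputable def BVal (n : ℕ) (π : BV → BV) (v : BV) : ℚ :=
  if h : ∃ k, π^[k] v = BV.s then
    ∑ i ∈ Finset.range (Nat.find h), rB n (π^[i] v) (π^[i + 1] v)
  else 0

/-- The reduced costs of the edge `(u,v)` w.r.t. the policy `π`. -/
noncomputable def zB (n : ℕ) (π : BV → BV) (u v : BV) : ℚ :=
  rB n u v + BVal n π v - BVal n π u

/-- The edge `(u,v)` is an improving switch for `π` if its reduced costs are positive. -/
def BImproving (n : ℕ) (π : BV → BV) (u v : BV) : Prop :=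
  BEdge n u v ∧ 0 < zB n π u v

/-- The Bland numbering `𝒩_{𝔅_n}` of the edges of `𝔅_n`. -/
def NB (n : ℕ) (u v : BV) : ℕ :=
  match u, v with
  | BV.t, BV.a i => i
  | BV.a i, BV.b _ => n + 1 + 5 * (i - 1)
  | BV.a i, BV.a _ => n + 2 + 5 * (i - 1)
  | BV.a i, BV.s => n + 2 + 5 * (i - 1)
  | BV.a i, BV.t => n + 3 + 5 * (i - 1)
  | BV.b i, BV.b _ => n + 4 + 5 * (i - 1)
  | BV.b i, BV.d => n + 4 + 5 * (i - 1)
  | BV.b i, BV.a _ => n + 5 + 5 * (i - 1)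
  | BV.b i, BV.s => n + 5 + 5 * (i - 1)
  | BV.d, BV.s => 6 * n + 1
  | BV.s, BV.s => 6 * n + 2
  | _, _ => 0

/-- One step of Bland's policy iteration with edge numbering `N`:
apply the improving switch with the smallest number. -/
def IsBlandStep (n : ℕ) (N : BV → BV → ℕ) (π π' : BV → BV) : Prop :=
  ∃ u v, BImproving n π u v ∧ (∀ u' v', BImproving n π u' v' → N u v ≤ N u' v') ∧
    π' = Function.update π u v

/-- `BlandReaches n N π ψ` says that Bland's policy iteration started at `π` visits `ψ`. -/
def BlandReaches (n : ℕ) (N : BV → BV → ℕ) : (BV → BV) → (BV → BV) → Prop :=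
  Relation.ReflTransGen (IsBlandStep n N)

/-- The canonical policy `π_0` for `0`: `travel 1`, `skip i` and `leave i` are active. -/
def pi0 (n : ℕ) : BV → BV := fun u =>
  match u with
  | BV.t => BV.a 1
  | BV.a i => aN n (i + 1)
  | BV.b i => aN n (i + 1)
  | BV.d => BV.s
  | BV.s => BV.s

/-- The optimal policy `π_*`: `travel 1`, `enter i` for all `i`, `leave j` for `j < n`,
and `stay n` are active. -/
def piStar (n : ℕ) : BV → BV := fun u =>
  match u with
  | BV.t => BV.a 1
  | BV.a i => BV.b i
  | BV.b i => if i = n then BV.d else BV.a (i + 1)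
  | BV.d => BV.s
  | BV.s => BV.s

/-! ## Bits and canonical policies -/

/-- The least significant set bit `ℓ_1(x)` (1-based). -/
noncomputable def lsb (x : ℕ) : ℕ := sInf {i | 1 ≤ i ∧ Nat.testBit x (i - 1)}

/-- The most significant set bit `m(x)` (1-based). -/
noncomputable def msb1 (x : ℕ) : ℕ := sSup {i | 1 ≤ i ∧ Nat.testBit x (i - 1)}

/-- The least unset bit `ℓ_0(x)` (1-based). -/
noncomputable def lzero (x : ℕ) : ℕ := sInf {i | 1 ≤ i ∧ ¬ Nat.testBit x (i - 1)}

/-- `L_i(x) = max { j ≤ i-2 | x_j = 1 or j = 1 }` (1-based bits). -/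
noncomputable def Lfun (i x : ℕ) : ℕ :=
  sSup {j | 1 ≤ j ∧ j ≤ i - 2 ∧ (Nat.testBit x (j - 1) ∨ j = 1)}

/-- `IsCanonical n x π` says that `π` is the canonical policy `π_x` for `x`. -/
noncomputable def IsCanonical (n x : ℕ) (π : BV → BV) : Prop :=
  IsBPolicy n π ∧
  if x = 0 then
    π BV.t = BV.a 1 ∧
      ∀ i, 1 ≤ i → i ≤ n → π (BV.a i) = aN n (i + 1) ∧ π (BV.b i) = aN n (i + 1)
  else
    π BV.t = BV.a (lsb x) ∧
    π (BV.b (msb1 x)) = aN n (msb1 x + 1) ∧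
    (∀ i, msb1 x < i → i ≤ n → π (BV.a i) = aN n (i + 1) ∧ π (BV.b i) = aN n (i + 1)) ∧
    ∀ i, 1 ≤ i → i ≤ n → Nat.testBit x (i - 1) →
      π (BV.a i) = BV.b i ∧
      (i = 2 → π (BV.b 1) = BV.a 2 ∧ (¬ Nat.testBit x 0 → π (BV.a 1) = BV.a 2)) ∧
      (3 ≤ i → Nat.testBit x (i - 2) → π (BV.b (i - 1)) = BV.a i) ∧
      (3 ≤ i → ¬ Nat.testBit x (i - 2) →
        π (BV.b (i - 1)) = BV.b i ∧ π (BV.a (i - 1)) = BV.a i ∧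
        π (BV.b (i - 2)) = BV.a (i - 1) ∧
        (Lfun i x < i - 2 →
          ∀ j, Lfun i x + 1 ≤ j → j ≤ i - 2 →
            π (BV.a j) = BV.t ∧ π (BV.b (j - 1)) = BV.b j) ∧
        (Lfun i x = 1 → ¬ Nat.testBit x 0 → π (BV.a 1) = BV.t))

/-- Activating a list of edges in a policy, from left to right. -/
def activateList (π : BV → BV) (L : List (BV × BV)) : BV → BV :=
  L.foldl (fun σ e => Function.update σ e.1 e.2) π

/-- The canonical phases w.r.t. an odd number `x` (with `ℓ := ℓ_0(x)`), as a list of edges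
to be activated in order. -/
noncomputable def phaseList (n x : ℕ) : List (BV × BV) :=
  let ℓ := lzero x
  (if Nat.testBit x ℓ then [(BV.b ℓ, aN n (ℓ + 1))] else []) ++
  (if Nat.testBit x ℓ ∨ msb1 x < ℓ then [(BV.b (ℓ - 1), BV.b ℓ)] else []) ++
  [(BV.a ℓ, BV.b ℓ), (BV.t, BV.a ℓ)] ++
  ((List.range (ℓ - 2)).map fun j => (BV.a (j + 1), BV.t)) ++
  [(BV.a (ℓ - 1), BV.a ℓ)] ++
  (((List.range (ℓ - 3)).reverse).map fun j => (BV.b (j + 1), BV.b (j + 2))) ++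
  (if ℓ = 2 then [(BV.b 1, BV.a 2)] else [])

/-! ## The Markov decision process `𝔇_n` -/

/-- Vertices of `𝔇_n`: the original vertices (`base`), and for every edge `(v,w)` of `𝔅_n`
other than the self-loop, the gadget vertices `x v w`, `y v w`, `z v w`. -/
inductive DV : Type where
  | base : BV → DV
  | x : BV → BV → DV
  | y : BV → BV → DV
  | z : BV → BV → DV
deriving DecidableEq

/-- The edges of `𝔅_n` that get replaced by gadgets (all edges except the self-loop `(s,s)`). -/
def DEdgePair (n : ℕ) (v w : BV) : Prop := BEdge n v w ∧ v ≠ BV.s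

/-- The vertex set of `𝔇_n`. -/
def IsDVertex (n : ℕ) : DV → Prop
  | DV.base v => IsBVertex n v
  | DV.x v w => DEdgePair n v w
  | DV.y v w => DEdgePair n v w
  | DV.z v w => DEdgePair n v w

/-- The agent vertices of `𝔇_n` (all vertices except the randomization vertices `y v w`). -/
def IsDAgent (n : ℕ) : DV → Prop
  | DV.base v => IsBVertex n v
  | DV.x v w => DEdgePair n v w
  | DV.y _ _ => False
  | DV.z v w => DEdgePair n v w

/-- The agent edges of `𝔇_n`. -/
def DEdge (n : ℕ) (u u' : DV) : Prop :=
  (∃ v w, DEdgePair n v w ∧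
    ((u = DV.base v ∧ u' = DV.x v w) ∨ (u = DV.x v w ∧ u' = DV.base v) ∨
     (u = DV.x v w ∧ u' = DV.y v w) ∨ (u = DV.z v w ∧ u' = DV.base w))) ∨
  (u = DV.base BV.s ∧ u' = DV.base BV.s)

/-- The reward function of `𝔇_n`: the edge `(z v w, w)` carries the reward of the original
edge `(v,w)`; all other agent edges have reward `0`. -/
def rD (n : ℕ) (u u' : DV) : ℚ :=
  match u, u' with
  | DV.z v w, DV.base w' => if w' = w then rB n v w else 0
  | _, _ => 0

/-- A policy for `𝔇_n` chooses an outgoing agent edge at every agent vertex. -/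
def IsDPolicy (n : ℕ) (π : DV → DV) : Prop := ∀ u, IsDAgent n u → DEdge n u (π u)

/-- `IsDVal n p π V` says that `V` satisfies the Bellman equations characterizing the value
function of the policy `π` for `𝔇_n` with probabilities `p`, with `V s = 0`. -/
def IsDVal (n : ℕ) (p : BV → ℚ) (π : DV → DV) (V : DV → ℚ) : Prop :=
  V (DV.base BV.s) = 0 ∧
  (∀ u, IsDAgent n u → V u = rD n u (π u) + V (π u)) ∧
  (∀ v w, DEdgePair n v w →
    V (DV.y v w) = p v * V (DV.z v w) + (1 - p v) * V (DV.base v))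

open Classical in
/-- The value function of a (weak unichain) policy `π` for `𝔇_n`: the unique solution of the
Bellman equations (normalized to `0` outside the vertex set). -/
noncomputable def DVal (n : ℕ) (p : BV → ℚ) (π : DV → DV) : DV → ℚ :=
  if h : ∃! V : DV → ℚ, IsDVal n p π V ∧ ∀ u, ¬ IsDVertex n u → V u = 0 then
    h.exists.choose
  else fun _ => 0

/-- The reduced costs of an agent edge `(u,u')` of `𝔇_n` w.r.t. the policy `π`. -/
noncomputable def zD (n : ℕ) (p : BV → ℚ) (π : DV → DV) (u u' : DV) : ℚ :=
  rD n u u' + DVal n p π u' - DVal n p π u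

/-- An agent edge of `𝔇_n` is an improving switch if its reduced costs are positive. -/
def DImproving (n : ℕ) (p : BV → ℚ) (π : DV → DV) (u u' : DV) : Prop :=
  DEdge n u u' ∧ 0 < zD n p π u u'

/-- One (agent or positive-probability randomization) step of the process `𝔇_n` under `π`. -/
def DStep (n : ℕ) (p : BV → ℚ) (π : DV → DV) (u u' : DV) : Prop :=
  (IsDAgent n u ∧ u' = π u) ∨
  (∃ v w, DEdgePair n v w ∧ u = DV.y v w ∧
    ((u' = DV.z v w ∧ 0 < p v) ∨ (u' = DV.base v ∧ 0 < 1 - p v)))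

/-- A policy for `𝔇_n` is weak unichain if it reaches `s` with probability one from every
vertex, i.e. `s` is reachable via active/positive-probability steps from every vertex. -/
def DWeakUnichain (n : ℕ) (p : BV → ℚ) (π : DV → DV) : Prop :=
  ∀ u, IsDVertex n u → Relation.ReflTransGen (DStep n p π) u (DV.base BV.s)

/-- The twin policy of a policy `π` for `𝔅_n`: every vertex `v ≠ s` is `π v`-oriented. -/
def twin (π : BV → BV) : DV → DV := fun u =>
  match u with
  | DV.base v => if v = BV.s then DV.base BV.s else DV.x v (π v)
  | DV.x v w => if w = π v then DV.y v w else DV.base v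
  | DV.y v w => DV.y v w
  | DV.z _ w => DV.base w

/-- The vertex numbering `𝒩_V` of `𝔅_n`: the order `(t, a 1, b 1, a 2, b 2, …, a n, b n, d, s)`. -/
def NV (n : ℕ) : BV → ℕ
  | BV.t => 1
  | BV.a i => 2 * i
  | BV.b i => 2 * i + 1
  | BV.d => 2 * n + 2
  | BV.s => 2 * n + 3

/-- The specific probabilities `p_v = 2^{-𝒩_V(v)·(n+5)}`. -/
noncomputable def pSpec (n : ℕ) (v : BV) : ℚ := (2 : ℚ) ^ (-((NV n v * (n + 5) : ℕ) : ℤ))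

/-- The set `B(v)` of agent edges of `𝔇_n` belonging to the vertex `v`. -/
def Belongs (n : ℕ) (v : BV) (e : DV × DV) : Prop :=
  ∃ w, DEdgePair n v w ∧
    (e = (DV.x v w, DV.y v w) ∨ e = (DV.base v, DV.x v w) ∨ e = (DV.x v w, DV.base v))

/-- Applying the improving switch `e` to the policy `π` yields `π'`. -/
def DApply (n : ℕ) (p : BV → ℚ) (π : DV → DV) (e : DV × DV) (π' : DV → DV) : Prop :=
  DImproving n p π e.1 e.2 ∧ π' = Function.update π e.1 e.2

/-- One step of Bland's policy iteration on `𝔇_n` with edge numbering `N`. -/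
def IsBlandStepD (n : ℕ) (p : BV → ℚ) (N : DV → DV → ℕ) (π π' : DV → DV) : Prop :=
  ∃ u u', DImproving n p π u u' ∧ (∀ a b, DImproving n p π a b → N u u' ≤ N a b) ∧
    π' = Function.update π u u'

/-- One step of Dantzig's policy iteration on `𝔇_n`: apply an improving switch of maximal
reduced costs. -/
def DantzigStep (n : ℕ) (p : BV → ℚ) (π π' : DV → DV) : Prop :=
  ∃ u u', DImproving n p π u u' ∧
    (∀ a b, DImproving n p π a b → zD n p π a b ≤ zD n p π u u') ∧
    π' = Function.update π u u'

/-- The finite set of vertices of `𝔅_n`, as a `Finset`. -/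
noncomputable def BVSet (n : ℕ) : Finset BV :=
  {BV.t, BV.d, BV.s} ∪ (Finset.Icc 1 n).image BV.a ∪ (Finset.Icc 1 n).image BV.b

/-- The finite set of agent vertices of `𝔇_n`, as a `Finset`. -/
noncomputable def DAgentSet (n : ℕ) : Finset DV := by
  classical
  exact ((BVSet n).image DV.base) ∪
    (((BVSet n ×ˢ BVSet n).filter fun e => DEdgePair n e.1 e.2).image fun e => DV.x e.1 e.2) ∪
    (((BVSet n ×ˢ BVSet n).filter fun e => DEdgePair n e.1 e.2).image fun e => DV.z e.1 e.2)

/-- The objective of the Largest Increase rule: the sum of the values of all agent vertices. -/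
noncomputable def LIobj (n : ℕ) (p : BV → ℚ) (π : DV → DV) : ℚ :=
  ∑ u ∈ DAgentSet n, DVal n p π u

/-- One step of the Largest Increase policy iteration on `𝔇_n`: apply an improving switch
maximizing the sum of all agent vertex values of the resulting policy. -/
def LIStep (n : ℕ) (p : BV → ℚ) (π π' : DV → DV) : Prop :=
  ∃ u u', DImproving n p π u u' ∧
    (∀ a b, DImproving n p π a b →
      LIobj n p (Function.update π a b) ≤ LIobj n p (Function.update π u u')) ∧
    π' = Function.update π u u'

/-- `N` is a Bland numbering `𝒩_{𝔇_n}` for `𝔇_n`: it is injective on agent edges, the edges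
`(x v w, v)` all come first, within each gadget `(x v w, y v w)` precedes `(v, x v w)`,
the gadget blocks are ordered according to `𝒩_{𝔅_n}`, and the self-loop comes last. -/
def IsDBlandNumbering (n : ℕ) (N : DV → DV → ℕ) : Prop :=
  (∀ u₁ u₂ u₁' u₂', DEdge n u₁ u₂ → DEdge n u₁' u₂' → N u₁ u₂ = N u₁' u₂' →
    u₁ = u₁' ∧ u₂ = u₂') ∧
  (∀ v w v' w', DEdgePair n v w → DEdgePair n v' w' →
    N (DV.x v w) (DV.base v) < N (DV.x v' w') (DV.y v' w')) ∧
  (∀ v w, DEdgePair n v w → N (DV.x v w) (DV.y v w) < N (DV.base v) (DV.x v w)) ∧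
  (∀ v w v' w', DEdgePair n v w → DEdgePair n v' w' → NB n v w < NB n v' w' →
    N (DV.base v) (DV.x v w) < N (DV.x v' w') (DV.y v' w')) ∧
  (∀ v w, DEdgePair n v w → N (DV.base v) (DV.x v w) < N (DV.base BV.s) (DV.base BV.s))
/-- Potential function: the optimal values on `𝔅_n`. -/
def UB (n : ℕ) : BV → ℚ
  | BV.t => 2 ^ (n + 1) - 2 + 3 / 4
  | BV.s => 0
  | BV.d => 0
  | BV.a i => 2 ^ (n + 1) - 2 ^ i + 3 / 4
  | BV.b i => 2 ^ (n + 1) - 2 ^ (i + 1) + 3 / 4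

theorem UB_le (n : ℕ) (v : BV) (hv : IsBVertex n v) : UB n v ≤ 2 ^ (n + 1) := by
  have h0 : (0 : ℚ) < 2 ^ (n + 1) := by positivity
  cases v with
  | t => simp only [UB]; linarith
  | s => simp only [UB]; linarith
  | d => simp only [UB]; linarith
  | a i =>
    have : (1 : ℚ) ≤ 2 ^ i := one_le_pow₀ (by norm_num)
    simp only [UB]; linarith
  | b i =>
    have : (1 : ℚ) ≤ 2 ^ (i + 1) := one_le_pow₀ (by norm_num)
    simp only [UB]; linarith

theorem edge_facts (n : ℕ) (v w : BV) (h : DEdgePair n v w) :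
    IsBVertex n v ∧ IsBVertex n w ∧ rB n v w + UB n w ≤ UB n v ∧
      (∃ k : ℤ, rB n v w = k / 4) ∧ rB n v w ≤ 2 ^ n ∧ -(2 ^ n) ≤ rB n v w := by
  obtain ⟨h, hs⟩ := h
  have hn0 : (1 : ℚ) ≤ 2 ^ n := one_le_pow₀ (by norm_num)
  have mono : ∀ i, i ≤ n → (2 : ℚ) ^ i ≤ 2 ^ n := fun i hi =>
    pow_le_pow_right₀ (by norm_num) hi
  have two : ∀ i, 1 ≤ i → (2 : ℚ) ≤ 2 ^ i := fun i hi => by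
    calc (2 : ℚ) = 2 ^ 1 := by norm_num
      _ ≤ 2 ^ i := pow_le_pow_right₀ (by norm_num) hi
  have zero : ∃ k : ℤ, (0 : ℚ) = k / 4 := ⟨0, by norm_num⟩
  have tq : ∃ k : ℤ, (3 / 4 : ℚ) = k / 4 := ⟨3, by norm_num⟩
  rcases h with ⟨i, h1, h2, rfl, rfl⟩ | ⟨i, h1, h2, rfl, rfl⟩ | ⟨i, h1, h2, rfl, rfl⟩ |
    ⟨i, h1, h2, rfl, rfl⟩ | ⟨i, h1, h2, rfl, rfl⟩ | ⟨i, h1, h2, rfl, rfl⟩ | ⟨rfl, rfl⟩ | ⟨rfl, rfl⟩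
  · have := two i h1
    refine ⟨trivial, ⟨h1, h2⟩, ?_, zero, ?_, ?_⟩ <;> simp only [rB, UB] <;> linarith
  · have := mono i h2
    have := two i h1
    refine ⟨⟨h1, h2⟩, ⟨h1, h2⟩, ?_, ⟨4 * 2 ^ i, by simp [rB]⟩, ?_, ?_⟩ <;>
      simp only [rB, UB, if_true, pow_succ] <;> linarith
  · have := mono i h2
    have := two i h1
    by_cases hi : i = n
    · subst hi
      have e : aN i (i + 1) = BV.s := by simp [aN]
      rw [e]
      refine ⟨⟨h1, h2⟩, trivial, ?_, zero, ?_, ?_⟩ <;>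
        simp only [rB, UB, pow_succ] <;> linarith
    · have e : aN n (i + 1) = BV.a (i + 1) := by simp [aN, hi]
      rw [e]
      refine ⟨⟨h1, h2⟩, ⟨by omega, by omega⟩, ?_, zero, ?_, ?_⟩ <;>
        simp only [rB, UB, pow_succ] <;> linarith
  · have := mono i h2
    have := two i h1
    refine ⟨⟨h1, h2⟩, trivial, ?_, ⟨-(4 * 2 ^ i) + 5, by simp only [rB]; push_cast; ring⟩, ?_, ?_⟩ <;>
      simp only [rB, UB] <;> linarith
  · have := mono i h2
    have := two i h1
    by_cases hi : i = n
    · subst hi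
      have e : bN i (i + 1) = BV.d := by simp [bN]
      rw [e]
      refine ⟨⟨h1, h2⟩, trivial, ?_, ?_, ?_, ?_⟩ <;>
        simp only [rB, UB, pow_succ, if_true] <;> first | exact tq | linarith
    · have e : bN n (i + 1) = BV.b (i + 1) := by simp [bN, hi]
      rw [e]
      refine ⟨⟨h1, h2⟩, ⟨by omega, by omega⟩, ?_, ?_, ?_, ?_⟩ <;>
        simp only [rB, UB, pow_succ, if_true] <;> first | exact tq | linarith
  · have := mono i h2
    have := two i h1
    by_cases hi : i = n
    · subst hi
      have e : aN i (i + 1) = BV.s := by simp [aN]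
      rw [e]
      refine ⟨⟨h1, h2⟩, trivial, ?_, zero, ?_, ?_⟩ <;>
        simp only [rB, UB, pow_succ] <;> linarith
    · have e : aN n (i + 1) = BV.a (i + 1) := by simp [aN, hi]
      rw [e]
      refine ⟨⟨h1, h2⟩, ⟨by omega, by omega⟩, ?_, zero, ?_, ?_⟩ <;>
        simp only [rB, UB, pow_succ] <;> linarith
  · refine ⟨trivial, trivial, ?_, zero, ?_, ?_⟩ <;> simp only [rB, UB] <;> linarith
  · exact absurd rfl hs

theorem pol_base (n : ℕ) (π : DV → DV) (hπ : IsDPolicy n π) (v : BV) (hv : IsBVertex n v)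
    (hs : v ≠ BV.s) : ∃ w, DEdgePair n v w ∧ π (DV.base v) = DV.x v w := by
  rcases hπ (DV.base v) hv with ⟨v', w, h, h1 | h1 | h1 | h1⟩ | h1
  · obtain ⟨h1, h2⟩ := h1
    cases h1
    exact ⟨w, h, h2⟩
  · cases h1.1
  · cases h1.1
  · cases h1.1
  · exact absurd (DV.base.inj h1.1) hs

theorem pol_x (n : ℕ) (π : DV → DV) (hπ : IsDPolicy n π) (v w : BV) (h : DEdgePair n v w) :
    π (DV.x v w) = DV.base v ∨ π (DV.x v w) = DV.y v w := by
  rcases hπ (DV.x v w) h with ⟨v', w', h, h1 | h1 | h1 | h1⟩ | h1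
  · cases h1.1
  · obtain ⟨h1, h2⟩ := h1
    cases h1
    exact Or.inl h2
  · obtain ⟨h1, h2⟩ := h1
    cases h1
    exact Or.inr h2
  · cases h1.1
  · cases h1.1

theorem pol_z (n : ℕ) (π : DV → DV) (hπ : IsDPolicy n π) (v w : BV) (h : DEdgePair n v w) :
    π (DV.z v w) = DV.base w := by
  rcases hπ (DV.z v w) h with ⟨v', w', h, h1 | h1 | h1 | h1⟩ | h1
  · cases h1.1
  · cases h1.1
  · cases h1.1
  · obtain ⟨h1, h2⟩ := h1
    cases h1
    exact h2
  · cases h1.1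

theorem no_loop (n : ℕ) (p : BV → ℚ) (π : DV → DV) (hπ : IsDPolicy n π)
    (hwu : DWeakUnichain n p π) (v w : BV) (h : DEdgePair n v w)
    (h1 : π (DV.base v) = DV.x v w) : π (DV.x v w) = DV.y v w := by
  rcases pol_x n π hπ v w h with h2 | h2
  · exfalso
    have key : ∀ u, Relation.ReflTransGen (DStep n p π) (DV.base v) u →
        u = DV.base v ∨ u = DV.x v w := by
      intro u hu
      induction hu with
      | refl => exact Or.inl rfl
      | tail _ hst ih =>
        rcases ih with rfl | rfl
        · rcases hst with ⟨_, rfl⟩ | ⟨_, _, _, h3, _⟩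
          · exact Or.inr h1
          · cases h3
        · rcases hst with ⟨_, rfl⟩ | ⟨_, _, _, h3, _⟩
          · exact Or.inl h2
          · cases h3
    rcases key _ (hwu (DV.base v) (edge_facts n v w h).1) with h3 | h3
    · exact h.2 (DV.base.inj h3).symm
    · cases h3
  · exact h2

/-- The property propagated along paths to the sink. -/
def QP (n : ℕ) (V : DV → ℚ) (v : BV) : Prop :=
  V (DV.base v) ≤ UB n v ∧ ∃ k : ℤ, V (DV.base v) = k / 4

theorem val_facts (n : ℕ) (p : BV → ℚ)
    (hp : ∀ v, IsBVertex n v → v ≠ BV.s → 0 < p v ∧ p v ≤ 1)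
    (π : DV → DV) (hπ : IsDPolicy n π) (hwu : DWeakUnichain n p π)
    (V : DV → ℚ) (hV : IsDVal n p π V) (v : BV) (hv : IsBVertex n v) : QP n V v := by
  obtain ⟨hV0, hVa, hVy⟩ := hV
  let P : DV → Prop := fun u => match u with
    | DV.base v => QP n V v
    | DV.x v w => π (DV.base v) = DV.x v w → QP n V v
    | DV.y v w => π (DV.base v) = DV.x v w → QP n V v
    | DV.z _ w => QP n V w
  suffices hP : ∀ u, Relation.ReflTransGen (DStep n p π) u (DV.base BV.s) → P u from
    hP _ (hwu (DV.base v) hv)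
  intro u hu
  induction hu using Relation.ReflTransGen.head_induction_on with
  | refl => exact ⟨le_of_eq hV0, 0, by rw [hV0]; norm_num⟩
  | head hst _ ih =>
    rcases hst with ⟨hag, rfl⟩ | ⟨v', w', h, rfl, ⟨rfl, _⟩ | ⟨rfl, _⟩⟩
    · rename_i u' _
      cases u' with
      | base v' =>
        by_cases hs : v' = BV.s
        · subst hs
          exact ⟨le_of_eq hV0, 0, by rw [hV0]; norm_num⟩
        · obtain ⟨w, hw, he⟩ := pol_base n π hπ v' hag hs
          rw [he] at ih
          exact ih he
      | x v' w' =>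
        intro hvx
        rcases pol_x n π hπ v' w' hag with h2 | h2
        · rw [h2] at ih; exact ih
        · rw [h2] at ih; exact ih hvx
      | y v' w' => exact hag.elim
      | z v' w' =>
        rw [pol_z n π hπ v' w' hag] at ih
        exact ih
    · intro hvx
      have hxy := no_loop n p π hπ hwu v' w' h hvx
      obtain ⟨hv', hw', hU, ⟨k, hk⟩, _, _⟩ := edge_facts n v' w' h
      have e1 := hVa (DV.base v') hv'
      have e2 := hVa (DV.x v' w') h
      have e3 := hVa (DV.z v' w') h
      have e4 := hVy v' w' h
      rw [hvx] at e1
      rw [hxy] at e2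
      rw [pol_z n π hπ v' w' h] at e3
      simp only [rD, if_true] at e1 e2 e3
      have hpp := (hp v' hv' h.2).1
      have e5 : V (DV.base v') = V (DV.z v' w') := by
        have : p v' * (V (DV.base v') - V (DV.z v' w')) = 0 := by linarith
        rcases mul_eq_zero.1 this with h0 | h0 <;> linarith
      obtain ⟨i1, k', hk'⟩ : QP n V w' := ih
      refine ⟨by linarith, k + k', ?_⟩
      rw [e5, e3, hk, hk']; push_cast; ring
    · intro _
      exact ih

theorem quarter_bound (k : ℤ) (x : ℚ) (hx : x = k / 4) (h : 0 < x) : 1 / 4 ≤ x := by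
  have hk : (0 : ℚ) < k := by linarith
  have hk1 : (1 : ℤ) ≤ k := by exact_mod_cast hk
  have : (1 : ℚ) ≤ k := by exact_mod_cast hk1
  linarith

theorem final_bound (p Δ z M : ℚ) (k : ℤ) (hp : 0 < p) (hk : Δ = k / 4) (h1 : Δ ≤ M)
    (hz : z = p * Δ) (h0 : 0 < z) : p / 4 ≤ z ∧ z ≤ p * M := by
  have hd : 0 < Δ := by
    rw [hz] at h0
    exact (mul_pos_iff_of_pos_left hp).1 h0
  have := quarter_bound k Δ hk hd
  rw [hz]
  constructor
  · nlinarith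
  · exact mul_le_mul_of_nonneg_left h1 hp.le

/-- Bounds on reduced costs: if `e ∈ B(v)` is an improving switch for a weak unichain
policy `π` for `𝔇_n` with non-negative vertex values, then
`p_v / 4 ≤ z_π(e) ≤ p_v · 2^{n+2}`. -/
theorem stmt14 (n : ℕ) (hn : 1 ≤ n) (p : BV → ℚ)
    (hp : ∀ v, IsBVertex n v → v ≠ BV.s → 0 < p v ∧ p v ≤ 1)
    (v : BV) (hv : IsBVertex n v) (hvs : v ≠ BV.s)
    (e : DV × DV) (he : Belongs n v e)
    (π : DV → DV) (hπ : IsDPolicy n π) (hwu : DWeakUnichain n p π)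
    (hnn : ∀ u, IsDVertex n u → 0 ≤ DVal n p π u)
    (himp : DImproving n p π e.1 e.2) :
    p v / 4 ≤ zD n p π e.1 e.2 ∧ zD n p π e.1 e.2 ≤ p v * 2 ^ (n + 2) := by
  by_cases hex : ∃! V : DV → ℚ, IsDVal n p π V ∧ ∀ u, ¬ IsDVertex n u → V u = 0
  · have hV : IsDVal n p π (DVal n p π) := by
      unfold DVal
      rw [dif_pos hex]
      exact hex.exists.choose_spec.1
    obtain ⟨w, hw, hew⟩ := he
    have hpos := himp.2
    unfold zD at hpos ⊢
    generalize DVal n p π = V at hV hnn hpos ⊢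
    have Qv := val_facts n p hp π hπ hwu V hV
    obtain ⟨hv', hw', hU, ⟨k, hk⟩, hr1, hr2⟩ := edge_facts n v w hw
    obtain ⟨q1, kv, q2⟩ := Qv v hv
    obtain ⟨q3, kw, q4⟩ := Qv w hw'
    have b1 := UB_le n v hv
    have b2 := UB_le n w hw'
    have n1 := hnn (DV.base v) hv
    have n2 := hnn (DV.base w) hw'
    have hpv := (hp v hv hvs).1
    obtain ⟨hV0, hVa, hVy⟩ := hV
    have e2 := hVa (DV.x v w) hw
    have e3 := hVa (DV.z v w) hw
    have e4 := hVy v w hw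
    rw [pol_z n π hπ v w hw] at e3
    simp only [rD, if_true] at e3
    have hpow : (2 : ℚ) ^ (n + 2) = 4 * 2 ^ n := by rw [pow_add]; ring
    have hpow1 : (2 : ℚ) ^ (n + 1) = 2 * 2 ^ n := by rw [pow_add]; ring
    have hn0 : (0 : ℚ) < 2 ^ n := by positivity
    have eD : rB n v w + V (DV.base w) - V (DV.base v) = ((k + kw - kv : ℤ) : ℚ) / 4 := by
      rw [hk, q2, q4]; push_cast; ring
    have eD' : -(rB n v w + V (DV.base w) - V (DV.base v)) = ((-(k + kw - kv) : ℤ) : ℚ) / 4 := by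
      rw [eD]; push_cast; ring
    rcases pol_x n π hπ v w hw with hx | hx <;> rw [hx] at e2 <;> simp only [rD] at e2 <;>
      rcases hew with rfl | rfl | rfl <;> simp only [rD] at hpos ⊢
    · exact final_bound (p v) _ _ _ _ hpv eD (by linarith) (by rw [e2, e4, e3]; ring) hpos
    · linarith
    · linarith
    · linarith
    · exact final_bound (p v) _ _ _ _ hpv eD (by linarith) (by rw [e2, e4, e3]; ring) hpos
    · exact final_bound (p v) _ _ _ _ hpv eD' (by linarith) (by rw [e2, e4, e3]; ring) hpos
  · exfalso
    have h0 : DVal n p π = fun _ => 0 := by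
      unfold DVal
      rw [dif_neg hex]
    have hpos := himp.2
    obtain ⟨w, hw, rfl | rfl | rfl⟩ := he <;> simp [zD, h0, rD] at hpos
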